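/- Let G be a simple graph on a finite vertex type V, and let u, v, w ∈ V be distinct vertices such that the neighborhood of v in G is exactly {u, w}, u and w are not adjacent, and the only common neighbor of u and w is v. Let G' be the simple graph on the vertex set V ∖ {v, w} in which distinct vertices a, b are adjacent iff G.Adj a b, or (a = u and G.Adj w b), or (b = u and G.Adj w a). Then G and G' have the same number of perfect matchings. (The shrinking lemma: contracting a chain u–v–w through a degree-2 vertex v does not change the number of perfect matchings.) -/

import Mathlib

open Finset

/-- A perfect matching: a set of edges of `G` such that every vertex belongs to
exactly one edge of the set. -/
def IsPM {V : Type*} (G : SimpleGraph V) (P : Finset (Sym2 V)) : Prop :=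
  (∀ e ∈ P, e ∈ G.edgeSet) ∧ ∀ v : V, ∃! e, e ∈ P ∧ v ∈ e

/-- The graph obtained by shrinking the chain u–v–w: delete v and w, and make the
neighbors of w (other than v) adjacent to u. Distinct vertices a, b of V∖{v,w} are
adjacent iff `G.Adj a b`, or (a = u and `G.Adj w b`), or (b = u and `G.Adj w a`). -/
def shrink {V : Type*} (G : SimpleGraph V) (u v w : V) :
    SimpleGraph {x : V // x ≠ v ∧ x ≠ w} :=
  SimpleGraph.fromRel (fun a b => G.Adj a.1 b.1 ∨ (a.1 = u ∧ G.Adj w b.1))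

def MF {V : Type*} (G : SimpleGraph V) : Set (V → V) :=
  {f | ∀ x, G.Adj x (f x) ∧ f (f x) = x}

theorem ncard_MF {V : Type*} [Fintype V] [DecidableEq V] (G : SimpleGraph V) :
    (MF G).ncard = {P : Finset (Sym2 V) | IsPM G P}.ncard := by
  refine Set.ncard_congr (fun f _ => Finset.univ.image (fun x => s(x, f x))) ?_ ?_ ?_
  · intro f hf
    refine ⟨?_, ?_⟩
    · intro e he
      obtain ⟨x, -, rfl⟩ := Finset.mem_image.1 he
      exact (hf x).1
    · intro x
      refine ⟨s(x, f x), ⟨Finset.mem_image.2 ⟨x, Finset.mem_univ _, rfl⟩, by simp⟩, ?_⟩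
      rintro e ⟨he, hx⟩
      obtain ⟨y, -, rfl⟩ := Finset.mem_image.1 he
      rcases Sym2.mem_iff.1 hx with h | h
      · subst h; rfl
      · subst h; rw [(hf y).2]; exact Sym2.eq_swap
  · intro f f' hf hf' h
    funext x
    have hx : s(x, f x) ∈ Finset.univ.image (fun x => s(x, f' x)) := by
      rw [← h]; exact Finset.mem_image.2 ⟨x, Finset.mem_univ _, rfl⟩
    obtain ⟨y, -, hy⟩ := Finset.mem_image.1 hx
    have := hf' y
    rcases Sym2.eq_iff.1 hy with ⟨h1, h2⟩ | ⟨h1, h2⟩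
    · grind
    · grind
  · rintro P ⟨hP, hu⟩
    have : ∀ x, ∃ y, s(x, y) ∈ P := by
      intro x
      obtain ⟨e, ⟨he, hx⟩, -⟩ := hu x
      obtain ⟨y, rfl⟩ := hx
      exact ⟨y, he⟩
    choose f hf using this
    have key : ∀ x y, s(x, y) ∈ P → f x = y := by
      intro x y h
      have := (hu x).unique ⟨hf x, by simp⟩ ⟨h, by simp⟩
      exact Sym2.congr_right.1 this
    refine ⟨f, fun x => ⟨hP _ (hf x), key _ _ ?_⟩, ?_⟩
    · rw [Sym2.eq_swap]; exact hf x
    · ext e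
      constructor
      · intro he
        obtain ⟨x, -, rfl⟩ := Finset.mem_image.1 he
        exact hf x
      · intro he
        induction e using Sym2.ind with
        | _ x y =>
          exact Finset.mem_image.2 ⟨x, Finset.mem_univ _, by rw [key x y he]⟩

theorem shrink_adj {V : Type*} (G : SimpleGraph V) (u v w : V)
    (a b : {x : V // x ≠ v ∧ x ≠ w}) : (shrink G u v w).Adj a b ↔
      a.1 ≠ b.1 ∧ (G.Adj a.1 b.1 ∨ (a.1 = u ∧ G.Adj w b.1) ∨ (b.1 = u ∧ G.Adj w a.1)) := by
  have := G.adj_comm a.1 b.1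
  simp only [shrink, SimpleGraph.fromRel_adj, ne_eq, Subtype.ext_iff]
  tauto

def g0 {V : Type*} [DecidableEq V] (u v w : V) (f : V → V) (x : V) : V :=
  if x = u then (if f v = u then f w else f u) else if f x = w then u else f x

/-- The shrinking lemma: contracting a chain u–v–w through a degree-2 vertex v
does not change the number of perfect matchings. -/
theorem shrinking_lemma {V : Type*} [Fintype V] [DecidableEq V]
    (G : SimpleGraph V) (u v w : V)
    (huv : u ≠ v) (huw : u ≠ w) (hvw : v ≠ w)
    (hnbhd : G.neighborSet v = {u, w})
    (hnadj : ¬ G.Adj u w)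
    (hcommon : G.neighborSet u ∩ G.neighborSet w = {v}) :
    {P : Finset (Sym2 V) | IsPM G P}.ncard =
      {P : Finset (Sym2 {x : V // x ≠ v ∧ x ≠ w}) | IsPM (shrink G u v w) P}.ncard := by
  rw [← ncard_MF, ← ncard_MF]
  have hv : ∀ x, G.Adj v x ↔ x = u ∨ x = w := fun x => by
    rw [← SimpleGraph.mem_neighborSet, hnbhd]; simp
  have hc : ∀ x, G.Adj u x → G.Adj w x → x = v := fun x h1 h2 => by
    have : x ∈ G.neighborSet u ∩ G.neighborSet w := ⟨h1, h2⟩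
    rw [hcommon] at this; simpa using this
  have hs : ∀ a b, G.Adj a b → G.Adj b a := fun _ _ h => h.symm
  have hirr : ∀ a, ¬ G.Adj a a := fun a => G.irrefl
  have hA : ∀ f ∈ MF G, (∀ x, G.Adj x (f x)) ∧ (∀ x, f (f x) = x) :=
    fun f hf => ⟨fun x => (hf x).1, fun x => (hf x).2⟩
  have hg : ∀ f ∈ MF G, ∀ x, x ≠ v ∧ x ≠ w → g0 u v w f x ≠ v ∧ g0 u v w f x ≠ w := by
    intro f hf x hx
    obtain ⟨h1, h2⟩ := hA f hf
    have a1 := h1 v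
    have a2 := h1 w
    have a3 := h1 u
    have b1 := h2 v
    have b2 := h2 w
    have b3 := h2 u
    have b4 := h2 x
    rw [hv] at a1
    unfold g0
    grind
  refine Set.ncard_congr (fun f hf x => ⟨g0 u v w f x.1, hg f hf x.1 x.2⟩) ?_ ?_ ?_
  · rintro f hf ⟨x, hx⟩
    obtain ⟨h1, h2⟩ := hA f hf
    have a1 := h1 v
    have a2 := h1 w
    have a3 := h1 u
    have a4 := h1 x
    have b1 := h2 v
    have b2 := h2 w
    have b3 := h2 u
    have b4 := h2 x
    rw [hv] at a1
    rw [shrink_adj, Subtype.ext_iff]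
    dsimp only
    unfold g0
    refine ⟨⟨?_, ?_⟩, ?_⟩ <;> grind
  · intro f f' hf hf' h
    have h : ∀ x, x ≠ v ∧ x ≠ w → g0 u v w f x = g0 u v w f' x := fun x hx =>
      congrArg Subtype.val (congrFun h ⟨x, hx⟩)
    obtain ⟨h1, h2⟩ := hA f hf
    obtain ⟨h1', h2'⟩ := hA f' hf'
    have hu := h u ⟨huv, huw⟩
    have hgu := hg f hf u ⟨huv, huw⟩
    have a1 := h1 v
    have a2 := h1 w
    have a3 := h1 u
    have b1 := h2 v
    have b2 := h2 w
    have b3 := h2 u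
    have a1' := h1' v
    have a2' := h1' w
    have a3' := h1' u
    have b1' := h2' v
    have b2' := h2' w
    have b3' := h2' u
    rw [hv] at a1 a1'
    have hfv : f v = f' v := by
      unfold g0 at hu hgu
      grind
    have hfu : f u = f' u := by
      unfold g0 at hu
      grind
    have hfw : f w = f' w := by
      unfold g0 at hu
      grind
    funext x
    by_cases hxv : x = v
    · rw [hxv, hfv]
    by_cases hxw : x = w
    · rw [hxw, hfw]
    by_cases hxu : x = u
    · rw [hxu, hfu]
    have hx := h x ⟨hxv, hxw⟩
    have b4 := h2 x
    have b4' := h2' x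
    unfold g0 at hx
    grind
  · intro g hgm
    obtain ⟨k, hk⟩ : ∃ k : V → V, ∀ x, k x.1 = (g x).1 :=
      ⟨fun x => if h : x ≠ v ∧ x ≠ w then (g ⟨x, h⟩).1 else x, fun x => by simp [x.2.1, x.2.2]⟩
    have k1 : ∀ x, x ≠ v → x ≠ w → k x ≠ v ∧ k x ≠ w ∧ k (k x) = x ∧ x ≠ k x ∧
        (G.Adj x (k x) ∨ (x = u ∧ G.Adj w (k x)) ∨ (k x = u ∧ G.Adj w x)) := by
      intro x hxv hxw
      have e := hk ⟨x, hxv, hxw⟩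
      have hm := hgm ⟨x, hxv, hxw⟩
      rw [shrink_adj] at hm
      dsimp only at e hm
      have e2 := hk (g ⟨x, hxv, hxw⟩)
      rw [hm.2] at e2
      rw [e]
      exact ⟨(g ⟨x, hxv, hxw⟩).2.1, (g ⟨x, hxv, hxw⟩).2.2, e2, hm.1⟩
    have ku := k1 u huv huw
    have hvu := (hv u).2 (Or.inl rfl)
    have hvw' := (hv w).2 (Or.inr rfl)
    by_cases hb : G.Adj u (k u)
    · let f : V → V := fun x => if x = v then w else if x = w then v else k x
      have hf : f ∈ MF G := by
        intro x
        have := k1 x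
        simp only [f]
        constructor <;> grind
      refine ⟨f, hf, ?_⟩
      funext ⟨x, hxv, hxw⟩
      apply Subtype.ext
      rw [← hk]
      have := k1 x
      simp only [f, g0]
      grind
    · let f : V → V := fun x => if x = v then u else if x = u then v else
        if x = w then k u else if x = k u then w else k x
      have hf : f ∈ MF G := by
        intro x
        have := k1 x
        simp only [f]
        constructor <;> grind
      refine ⟨f, hf, ?_⟩
      funext ⟨x, hxv, hxw⟩
      apply Subtype.ext
      rw [← hk]
      have := k1 x
      simp only [f, g0]
      grind
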